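/- In a braided quantum group, the antipode is braided anticomultiplicative: φκ = σ(κ⊗κ)φ. -/

import Mathlib

open TensorProduct LinearMap

noncomputable section

variable (A : Type*) [Ring A] [Algebra ℂ A]

/-- Two-fold tensor product of `A` with itself. -/
abbrev T2 := A ⊗[ℂ] A
/-- Three-fold tensor product (right associated). -/
abbrev T3 := A ⊗[ℂ] (A ⊗[ℂ] A)
/-- Four-fold tensor product (right associated). -/
abbrev T4 := A ⊗[ℂ] (A ⊗[ℂ] (A ⊗[ℂ] A))

variable {A}

/-- The multiplication of `A` as a linear map. -/
def mA : T2 A →ₗ[ℂ] A := LinearMap.mul' ℂ A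

/-- `f ⊗ id` : a map of `T2` acting on the factors 1,2 of `T3`. -/
def op12 (f : T2 A →ₗ[ℂ] T2 A) : T3 A →ₗ[ℂ] T3 A :=
  (TensorProduct.assoc ℂ A A A).toLinearMap ∘ₗ f.rTensor A ∘ₗ
    (TensorProduct.assoc ℂ A A A).symm.toLinearMap

/-- `id ⊗ f` : a map of `T2` acting on the factors 2,3 of `T3`. -/
def op23 (f : T2 A →ₗ[ℂ] T2 A) : T3 A →ₗ[ℂ] T3 A := f.lTensor A

/-- `f ⊗ id ⊗ id` : a map of `T2` acting on the factors 1,2 of `T4`. -/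
def op12_4 (f : T2 A →ₗ[ℂ] T2 A) : T4 A →ₗ[ℂ] T4 A :=
  (TensorProduct.assoc ℂ A A (T2 A)).toLinearMap ∘ₗ f.rTensor (T2 A) ∘ₗ
    (TensorProduct.assoc ℂ A A (T2 A)).symm.toLinearMap

/-- `id ⊗ f ⊗ id` : a map of `T2` acting on the factors 2,3 of `T4`. -/
def op23_4 (f : T2 A →ₗ[ℂ] T2 A) : T4 A →ₗ[ℂ] T4 A := (op12 f).lTensor A

/-- `id ⊗ id ⊗ f` : a map of `T2` acting on the factors 3,4 of `T4`. -/
def op34_4 (f : T2 A →ₗ[ℂ] T2 A) : T4 A →ₗ[ℂ] T4 A := (f.lTensor A).lTensor A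

/-- `m ⊗ id : T3 → T2`. -/
def m12 : T3 A →ₗ[ℂ] T2 A :=
  (mA (A := A)).rTensor A ∘ₗ (TensorProduct.assoc ℂ A A A).symm.toLinearMap

/-- `id ⊗ m : T3 → T2`. -/
def m23 : T3 A →ₗ[ℂ] T2 A := (mA (A := A)).lTensor A

/-- `m ⊗ m : T4 → T2`. -/
def mm : T4 A →ₗ[ℂ] T2 A := m12 ∘ₗ ((mA (A := A)).lTensor A).lTensor A

/-- A braided quantum group structure on the algebra `A` (Đurđević).
`φ` is the coproduct, `ε` the counit, `κ` the antipode, `σ` the braiding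
(with given inverse `σ'`). -/
structure BQG (A : Type*) [Ring A] [Algebra ℂ A] where
  φ : A →ₗ[ℂ] T2 A
  ε : A →ₗ[ℂ] ℂ
  κ : A →ₗ[ℂ] A
  σ : T2 A →ₗ[ℂ] T2 A
  σ' : T2 A →ₗ[ℂ] T2 A
  σ_comp : σ ∘ₗ σ' = LinearMap.id
  comp_σ : σ' ∘ₗ σ = LinearMap.id
  κ_bij : Function.Bijective κ
  /-- coassociativity `(φ⊗id)φ = (id⊗φ)φ` -/
  coassoc : (TensorProduct.assoc ℂ A A A).toLinearMap ∘ₗ φ.rTensor A ∘ₗ φ = φ.lTensor A ∘ₗ φ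
  /-- `(ε⊗id)φ = id` -/
  counit_left : (TensorProduct.lid ℂ A).toLinearMap ∘ₗ ε.rTensor A ∘ₗ φ = LinearMap.id
  /-- `(id⊗ε)φ = id` -/
  counit_right : (TensorProduct.rid ℂ A).toLinearMap ∘ₗ ε.lTensor A ∘ₗ φ = LinearMap.id
  /-- `σ(m⊗id) = (id⊗m)(σ⊗id)(id⊗σ)` -/
  braid_mul_left : σ ∘ₗ m12 = m23 ∘ₗ op12 σ ∘ₗ op23 σ
  /-- `σ(id⊗m) = (m⊗id)(id⊗σ)(σ⊗id)` -/
  braid_mul_right : σ ∘ₗ m23 = m12 ∘ₗ op23 σ ∘ₗ op12 σ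
  /-- `φm = (m⊗m)(id⊗σ⊗id)(φ⊗φ)` -/
  comul_mul : φ ∘ₗ mA = mm ∘ₗ op23_4 σ ∘ₗ
      (TensorProduct.assoc ℂ A A (T2 A)).toLinearMap ∘ₗ φ.rTensor (T2 A) ∘ₗ φ.lTensor A
  /-- `(σ⊗id²)(id⊗φ⊗id)(σ⁻¹⊗id)(id⊗φ) = (id²⊗σ)(id⊗φ⊗id)(id⊗σ⁻¹)(φ⊗id)` -/
  mixed_coassoc :
    op12_4 σ ∘ₗ ((TensorProduct.assoc ℂ A A A).toLinearMap ∘ₗ φ.rTensor A).lTensor A ∘ₗ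
        op12 σ' ∘ₗ φ.lTensor A
      = op34_4 σ ∘ₗ ((TensorProduct.assoc ℂ A A A).toLinearMap ∘ₗ φ.rTensor A).lTensor A ∘ₗ
        op23 σ' ∘ₗ (TensorProduct.assoc ℂ A A A).toLinearMap ∘ₗ φ.rTensor A
  /-- `m(κ⊗id)φ = 1ε` -/
  antipode_left : mA ∘ₗ κ.rTensor A ∘ₗ φ = Algebra.linearMap ℂ A ∘ₗ ε
  /-- `m(id⊗κ)φ = 1ε` -/
  antipode_right : mA ∘ₗ κ.lTensor A ∘ₗ φ = Algebra.linearMap ℂ A ∘ₗ ε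

namespace BQG

variable {A : Type*} [Ring A] [Algebra ℂ A] (G : BQG A)

/-- `φ ⊗ id : T2 → T3`. -/
def φ1 : T2 A →ₗ[ℂ] T3 A := (TensorProduct.assoc ℂ A A A).toLinearMap ∘ₗ G.φ.rTensor A

/-- `id ⊗ φ : T2 → T3`. -/
def φ2 : T2 A →ₗ[ℂ] T3 A := G.φ.lTensor A

/-- `id² ⊗ ε : T3 → T2`. -/
def ε3r : T3 A →ₗ[ℂ] T2 A :=
  ((TensorProduct.rid ℂ A).toLinearMap ∘ₗ G.ε.lTensor A).lTensor A

/-- `ε ⊗ id² : T3 → T2`. -/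
def ε3l : T3 A →ₗ[ℂ] T2 A :=
  (TensorProduct.lid ℂ (T2 A)).toLinearMap ∘ₗ G.ε.rTensor (T2 A)

/-- The secondary braiding `τ = (id²⊗ε)(id⊗σ⁻¹)(φ⊗id)σ`. -/
def τ : T2 A →ₗ[ℂ] T2 A := G.ε3r ∘ₗ op23 G.σ' ∘ₗ G.φ1 ∘ₗ G.σ

/-- `ε ⊗ ε : T2 → ℂ`. -/
def εε : T2 A →ₗ[ℂ] ℂ :=
  (TensorProduct.lid ℂ ℂ).toLinearMap ∘ₗ G.ε.rTensor ℂ ∘ₗ G.ε.lTensor A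

end BQG

/-!
The braiding `σ` makes `A ⊗ A` an algebra `A ⊗_σ A` in which `a ⊗ b = (a ⊗ 1)(1 ⊗ b)` and
`σ(b ⊗ a) = (1 ⊗ b)(a ⊗ 1)`. With `i` and `j` the two embeddings of `A`, this says that in the
convolution algebra of linear maps `A → A ⊗_σ A` we have `φ = i * j` and
`σ(κ ⊗ κ)φ = (j ∘ κ) * (i ∘ κ)`. Since `κ` is the convolution inverse of `id`, the second map is a
right inverse of the first. Multiplicativity of `φ` makes `φ ∘ κ` a left inverse of `φ`, so the two
inverses agree.
-/

open Coalgebra WithConv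

section TwistedTensorProduct

variable {R S T : Type*} [CommSemiring R] [Semiring S] [Algebra R S] [Semiring T] [Algebra R T]

/-- The map `x ⊗ y ↦ s x ⊗ y t` on `S ⊗ T`, i.e. the `(S, T)`-bimodule action. -/
def outerMul (s : S) (t : T) : S ⊗[R] T →ₗ[R] S ⊗[R] T :=
  TensorProduct.map (LinearMap.mulLeft R s) (LinearMap.mulRight R t)

@[simp]
theorem outerMul_tmul (s x : S) (t y : T) :
    outerMul s t (x ⊗ₜ[R] y) = (s * x) ⊗ₜ (y * t) := rfl

theorem outerMul_outerMul (s s' : S) (t t' : T) (x : S ⊗[R] T) :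
    outerMul s t (outerMul s' t' x) = outerMul (s * s') (t' * t) x := by
  induction x with
  | zero => simp only [map_zero]
  | tmul x y => simp only [outerMul_tmul, mul_assoc]
  | add x y hx hy => simp only [map_add, hx, hy]

@[simp]
theorem outerMul_one_one (x : S ⊗[R] T) : outerMul 1 1 x = x := by
  simp [outerMul]

/-- The product `(s ⊗ t)(s' ⊗ t') = s σ(t ⊗ s') t'` on `S ⊗ T` defined by a linear map `σ`
exchanging the factors. -/
def twistedMul (σ : T ⊗[R] S →ₗ[R] S ⊗[R] T) : S ⊗[R] T →ₗ[R] S ⊗[R] T →ₗ[R] S ⊗[R] T :=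
  TensorProduct.curry <|
    TensorProduct.map (mul' R S) (mul' R T) ∘ₗ
      (tensorTensorTensorAssoc R S S T T).symm.toLinearMap ∘ₗ
        (σ.lTensor S).rTensor T ∘ₗ (tensorTensorTensorAssoc R S T S T).toLinearMap

theorem twistedMul_tmul_tmul (σ : T ⊗[R] S →ₗ[R] S ⊗[R] T) (s s' : S) (t t' : T) :
    twistedMul σ (s ⊗ₜ t) (s' ⊗ₜ t') = outerMul s t' (σ (t ⊗ₜ s')) := by
  simp only [twistedMul, TensorProduct.curry_apply, LinearMap.comp_apply, LinearEquiv.coe_coe,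
    tensorTensorTensorAssoc_tmul, rTensor_tmul, lTensor_tmul]
  induction σ (t ⊗ₜ s') with
  | zero => simp
  | tmul x y => simp
  | add x y hx hy => simp only [map_add, add_tmul, tmul_add, hx, hy]

variable (R S T) in
/-- A twisting map for algebras `S` and `T`: an exchange `T ⊗ S → S ⊗ T` compatible with units and
products, which is what makes `twistedMul` a unital associative product. The laws
`σ(m ⊗ id) = (id ⊗ m)(σ ⊗ id)(id ⊗ σ)` and `σ(id ⊗ m) = (m ⊗ id)(id ⊗ σ)(σ ⊗ id)` are expressed
through `twistedMul`, which avoids reassociating triple tensor products. -/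
structure TwistingMap where
  toLinearMap : T ⊗[R] S →ₗ[R] S ⊗[R] T
  map_one_tmul (s : S) : toLinearMap (1 ⊗ₜ s) = s ⊗ₜ 1
  map_tmul_one (t : T) : toLinearMap (t ⊗ₜ 1) = 1 ⊗ₜ t
  map_mul_tmul (t t' : T) (s : S) :
    toLinearMap ((t * t') ⊗ₜ s) = twistedMul toLinearMap (1 ⊗ₜ t) (toLinearMap (t' ⊗ₜ s))
  map_tmul_mul (t : T) (s s' : S) :
    toLinearMap (t ⊗ₜ (s * s')) = twistedMul toLinearMap (toLinearMap (t ⊗ₜ s)) (s' ⊗ₜ 1)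

namespace TwistingMap

/-- The unit laws of a twisting map follow from its product laws when it is surjective: since
`1 * 1 = 1`, the tensor `1 ⊗ 1` is neutral for `twistedMul` on the image. -/
def ofSurjective (σ : T ⊗[R] S →ₗ[R] S ⊗[R] T) (hσ : Function.Surjective σ)
    (map_mul_tmul : ∀ (t t' : T) (s : S),
      σ ((t * t') ⊗ₜ s) = twistedMul σ (1 ⊗ₜ t) (σ (t' ⊗ₜ s)))
    (map_tmul_mul : ∀ (t : T) (s s' : S),
      σ (t ⊗ₜ (s * s')) = twistedMul σ (σ (t ⊗ₜ s)) (s' ⊗ₜ 1)) :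
    TwistingMap R S T where
  toLinearMap := σ
  map_one_tmul s := by
    have one_mul_σ (z : T ⊗[R] S) : twistedMul σ (1 ⊗ₜ 1) (σ z) = σ z := by
      induction z with
      | zero => simp only [map_zero]
      | tmul t s => rw [← map_mul_tmul, one_mul]
      | add z w hz hw => simp only [map_add, hz, hw]
    obtain ⟨z, hz⟩ := hσ (s ⊗ₜ 1)
    simpa [hz, twistedMul_tmul_tmul] using one_mul_σ z
  map_tmul_one t := by
    have σ_mul_one (z : T ⊗[R] S) : twistedMul σ (σ z) (1 ⊗ₜ 1) = σ z := by
      induction z with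
      | zero => simp only [map_zero, LinearMap.zero_apply]
      | tmul t s => rw [← map_tmul_mul, mul_one]
      | add z w hz hw => simp only [map_add, LinearMap.add_apply, hz, hw]
    obtain ⟨z, hz⟩ := hσ (1 ⊗ₜ t)
    simpa [hz, twistedMul_tmul_tmul] using σ_mul_one z
  map_mul_tmul := map_mul_tmul
  map_tmul_mul := map_tmul_mul

variable (τ : TwistingMap R S T)

theorem twistedMul_one_tmul_one (x : S ⊗[R] T) : twistedMul τ.toLinearMap (1 ⊗ₜ 1) x = x := by
  induction x with
  | zero => simp only [map_zero]
  | tmul s t => simp [twistedMul_tmul_tmul, τ.map_one_tmul]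
  | add x y hx hy => simp only [map_add, hx, hy]

theorem twistedMul_flip_one_tmul_one (x : S ⊗[R] T) :
    twistedMul τ.toLinearMap x (1 ⊗ₜ 1) = x := by
  induction x with
  | zero => simp only [map_zero, LinearMap.zero_apply]
  | tmul s t => simp [twistedMul_tmul_tmul, τ.map_tmul_one]
  | add x y hx hy => simp only [map_add, LinearMap.add_apply, hx, hy]

theorem twistedMul_outerMul_tmul (s s' : S) (t t' : T) (x : S ⊗[R] T) :
    twistedMul τ.toLinearMap (outerMul s t x) (s' ⊗ₜ t') =
      outerMul s t' (twistedMul τ.toLinearMap x (τ.toLinearMap (t ⊗ₜ s'))) := by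
  induction x with
  | zero => simp only [map_zero, LinearMap.zero_apply]
  | tmul x y =>
    rw [outerMul_tmul, twistedMul_tmul_tmul, τ.map_mul_tmul]
    induction τ.toLinearMap (t ⊗ₜ s') with
    | zero => simp only [map_zero]
    | tmul u v => simp only [twistedMul_tmul_tmul, outerMul_outerMul, mul_one]
    | add u v hu hv => simp only [map_add, hu, hv]
  | add x y hx hy => simp only [map_add, LinearMap.add_apply, hx, hy]

theorem twistedMul_tmul_outerMul (s s' : S) (t t' : T) (x : S ⊗[R] T) :
    twistedMul τ.toLinearMap (s ⊗ₜ t) (outerMul s' t' x) =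
      outerMul s t' (twistedMul τ.toLinearMap (τ.toLinearMap (t ⊗ₜ s')) x) := by
  induction x with
  | zero => simp only [map_zero]
  | tmul x y =>
    rw [outerMul_tmul, twistedMul_tmul_tmul, τ.map_tmul_mul]
    induction τ.toLinearMap (t ⊗ₜ s') with
    | zero => simp only [map_zero, LinearMap.zero_apply]
    | tmul u v => simp only [twistedMul_tmul_tmul, outerMul_outerMul, one_mul]
    | add u v hu hv => simp only [map_add, LinearMap.add_apply, hu, hv]
  | add x y hx hy => simp only [map_add, hx, hy]

theorem twistedMul_assoc (x y z : S ⊗[R] T) :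
    twistedMul τ.toLinearMap (twistedMul τ.toLinearMap x y) z =
      twistedMul τ.toLinearMap x (twistedMul τ.toLinearMap y z) := by
  induction x with
  | zero => simp only [map_zero, LinearMap.zero_apply]
  | add x x' hx hx' => simp only [map_add, LinearMap.add_apply, hx, hx']
  | tmul s t =>
    induction z with
    | zero => simp only [map_zero]
    | add z z' hz hz' => simp only [map_add, hz, hz']
    | tmul s'' t'' =>
      induction y with
      | zero => simp only [map_zero, LinearMap.zero_apply]
      | add y y' hy hy' => simp only [map_add, LinearMap.add_apply, hy, hy']
      | tmul s' t' =>
        rw [twistedMul_tmul_tmul, τ.twistedMul_outerMul_tmul, twistedMul_tmul_tmul,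
          τ.twistedMul_tmul_outerMul]

/-- The twisted tensor product algebra: a copy of `S ⊗ T` carrying the product `twistedMul`. It is
a type synonym because `S ⊗ T` already has the componentwise product. -/
def TwistedTensor (_τ : TwistingMap R S T) : Type _ := S ⊗[R] T

instance : AddCommMonoid τ.TwistedTensor := inferInstanceAs (AddCommMonoid (S ⊗[R] T))

instance : Module R τ.TwistedTensor := inferInstanceAs (Module R (S ⊗[R] T))

/-- The identification of `S ⊗ T` with the underlying module of the twisted tensor product. -/
def of : S ⊗[R] T ≃ₗ[R] τ.TwistedTensor := LinearEquiv.refl R _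

instance : Semiring τ.TwistedTensor where
  mul x y := τ.of (twistedMul τ.toLinearMap (τ.of.symm x) (τ.of.symm y))
  one := τ.of (1 ⊗ₜ 1)
  left_distrib x y z := map_add (twistedMul τ.toLinearMap x) y z
  right_distrib x y z := map_add₂ (twistedMul τ.toLinearMap) x y z
  zero_mul x := map_zero₂ (twistedMul τ.toLinearMap) x
  mul_zero x := map_zero (twistedMul τ.toLinearMap x)
  mul_assoc := τ.twistedMul_assoc
  one_mul := τ.twistedMul_one_tmul_one
  mul_one := τ.twistedMul_flip_one_tmul_one

theorem of_mul_of (x y : S ⊗[R] T) : τ.of x * τ.of y = τ.of (twistedMul τ.toLinearMap x y) := rfl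

instance : Algebra R τ.TwistedTensor :=
  Algebra.ofModule (fun r x y ↦ map_smul₂ (twistedMul τ.toLinearMap) r x y)
    (fun r x y ↦ map_smul (twistedMul τ.toLinearMap x) r y)

/-- The algebra embedding `s ↦ s ⊗ 1` of the left factor. -/
def includeLeft : S →ₐ[R] τ.TwistedTensor :=
  AlgHom.ofLinearMap (τ.of.toLinearMap ∘ₗ (TensorProduct.mk R S T).flip 1) rfl fun s s' ↦ by
    simp [of_mul_of, twistedMul_tmul_tmul, τ.map_one_tmul]

/-- The algebra embedding `t ↦ 1 ⊗ t` of the right factor. -/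
def includeRight : T →ₐ[R] τ.TwistedTensor :=
  AlgHom.ofLinearMap (τ.of.toLinearMap ∘ₗ TensorProduct.mk R S T 1) rfl fun t t' ↦ by
    simp [of_mul_of, twistedMul_tmul_tmul, τ.map_tmul_one]

theorem includeLeft_apply (s : S) : τ.includeLeft s = τ.of (s ⊗ₜ 1) := rfl

theorem includeRight_apply (t : T) : τ.includeRight t = τ.of (1 ⊗ₜ t) := rfl

theorem includeLeft_mul_includeRight (s : S) (t : T) :
    τ.includeLeft s * τ.includeRight t = τ.of (s ⊗ₜ t) := by
  simp [includeLeft_apply, includeRight_apply, of_mul_of, twistedMul_tmul_tmul, τ.map_one_tmul]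

theorem includeRight_mul_includeLeft (s : S) (t : T) :
    τ.includeRight t * τ.includeLeft s = τ.of (τ.toLinearMap (t ⊗ₜ s)) := by
  simp [includeLeft_apply, includeRight_apply, of_mul_of, twistedMul_tmul_tmul]

section Convolution

variable {C : Type*} [AddCommMonoid C] [Module R C] [Coalgebra R C]

theorem includeLeft_convMul_includeRight (u : C →ₗ[R] S) (v : C →ₗ[R] T) :
    toConv (τ.includeLeft.toLinearMap ∘ₗ u) * toConv (τ.includeRight.toLinearMap ∘ₗ v) =
      toConv (τ.of.toLinearMap ∘ₗ TensorProduct.map u v ∘ₗ comul) := by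
  rw [LinearMap.convMul_def, ← LinearMap.comp_assoc, ← LinearMap.comp_assoc]
  congr 2
  ext c c'
  simp [includeLeft_mul_includeRight]

theorem includeRight_convMul_includeLeft (u : C →ₗ[R] S) (v : C →ₗ[R] T) :
    toConv (τ.includeRight.toLinearMap ∘ₗ v) * toConv (τ.includeLeft.toLinearMap ∘ₗ u) =
      toConv (τ.of.toLinearMap ∘ₗ τ.toLinearMap ∘ₗ TensorProduct.map v u ∘ₗ comul) := by
  rw [LinearMap.convMul_def, ← LinearMap.comp_assoc, ← LinearMap.comp_assoc, ← LinearMap.comp_assoc]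
  congr 2
  ext c c'
  simp [includeRight_mul_includeLeft]

end Convolution

end TwistingMap

end TwistedTensorProduct

section Convolution

variable {R C S T : Type*} [CommSemiring R] [AddCommMonoid C] [Module R C] [Coalgebra R C]
  [Semiring S] [Algebra R S] [Semiring T] [Algebra R T]

theorem algHom_comp_convMul_eq_one (h : S →ₐ[R] T) {f g : C →ₗ[R] S}
    (hfg : toConv f * toConv g = 1) :
    toConv (h.toLinearMap ∘ₗ f) * toConv (h.toLinearMap ∘ₗ g) = 1 := by
  calc toConv (h.toLinearMap ∘ₗ f) * toConv (h.toLinearMap ∘ₗ g)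
    _ = toConv (h.toLinearMap ∘ₗ (toConv f * toConv g).ofConv) := by
      rw [algHom_comp_convMul_distrib, toConv_ofConv]
    _ = 1 := by
      rw [hfg]
      ext c
      simp

theorem TwistingMap.convMul_eq_one (τ : TwistingMap R S T) {u u' : C →ₗ[R] S} {v v' : C →ₗ[R] T}
    (hu : toConv u * toConv u' = 1) (hv : toConv v * toConv v' = 1) :
    toConv (τ.of.toLinearMap ∘ₗ TensorProduct.map u v ∘ₗ comul) *
      toConv (τ.of.toLinearMap ∘ₗ τ.toLinearMap ∘ₗ TensorProduct.map v' u' ∘ₗ comul) = 1 := by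
  let i (f : C →ₗ[R] S) := toConv (τ.includeLeft.toLinearMap ∘ₗ f)
  let j (f : C →ₗ[R] T) := toConv (τ.includeRight.toLinearMap ∘ₗ f)
  have j_mul_j : j v * j v' = 1 := algHom_comp_convMul_eq_one τ.includeRight hv
  have i_mul_i : i u * i u' = 1 := algHom_comp_convMul_eq_one τ.includeLeft hu
  rw [← includeLeft_convMul_includeRight, ← includeRight_convMul_includeLeft]
  calc (i u * j v) * (j v' * i u')
    _ = i u * (j v * j v') * i u' := by simp only [mul_assoc]
    _ = 1 := by rw [j_mul_j, mul_one, i_mul_i]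

theorem nonUnitalAlgHom_comp_eq_of_convMul_eq_one (h : S →ₙₐ[R] T) {f g : C →ₗ[R] S}
    {k : C →ₗ[R] T} (hgf : toConv g * toConv f = 1)
    (hfk : toConv ((h : S →ₗ[R] T) ∘ₗ f) * toConv k = 1) :
    (h : S →ₗ[R] T) ∘ₗ g = k := by
  have comp_mul (p q : WithConv (C →ₗ[R] S)) :
      toConv ((h : S →ₗ[R] T) ∘ₗ (p * q).ofConv) =
        toConv ((h : S →ₗ[R] T) ∘ₗ p.ofConv) * toConv ((h : S →ₗ[R] T) ∘ₗ q.ofConv) := by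
    rw [nonUnitalAlgHom_comp_convMul_distrib, toConv_ofConv]
  -- A non-unital `h` may move `1`, but `e` is a left unit for `h ∘ f`, which is right invertible.
  set e := toConv ((h : S →ₗ[R] T) ∘ₗ (1 : WithConv (C →ₗ[R] S)).ofConv)
  have e_mul : e * toConv ((h : S →ₗ[R] T) ∘ₗ f) = toConv ((h : S →ₗ[R] T) ∘ₗ f) := by
    rw [← comp_mul 1 (toConv f), one_mul]
  have e_eq_one : e = 1 := by
    rw [← mul_one e, ← hfk, ← mul_assoc, e_mul]
  have mul_eq_one : toConv ((h : S →ₗ[R] T) ∘ₗ g) * toConv ((h : S →ₗ[R] T) ∘ₗ f) = 1 := by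
    rw [← e_eq_one, ← comp_mul (toConv g) (toConv f), hgf]
  exact toConv_injective (left_inv_eq_right_inv mul_eq_one hfk)

end Convolution

theorem bqg_antipode_anticomul_general {R H : Type*} [CommSemiring R] [Semiring H] [Algebra R H]
    [Coalgebra R H] (σ : TwistingMap R H H)
    (comul_mul : ∀ a b : H, comul (R := R) (a * b) =
      twistedMul σ.toLinearMap (comul a) (comul b))
    (κ : H →ₗ[R] H)
    (antipode_left : mul' R H ∘ₗ κ.rTensor H ∘ₗ comul = Algebra.linearMap R H ∘ₗ counit)
    (antipode_right : mul' R H ∘ₗ κ.lTensor H ∘ₗ comul = Algebra.linearMap R H ∘ₗ counit) :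
    comul ∘ₗ κ = σ.toLinearMap ∘ₗ TensorProduct.map κ κ ∘ₗ comul := by
  let Δ : H →ₙₐ[R] σ.TwistedTensor :=
    { σ.of.toLinearMap ∘ₗ comul with
      map_zero' := map_zero (σ.of.toLinearMap ∘ₗ comul)
      map_mul' a b := congrArg σ.of (comul_mul a b) }
  have κ_mul_id : toConv κ * toConv LinearMap.id = 1 := congrArg toConv antipode_left
  have id_mul_κ : toConv LinearMap.id * toConv κ = 1 := congrArg toConv antipode_right
  have Δ_mul := σ.convMul_eq_one id_mul_κ id_mul_κ
  rw [TensorProduct.map_id, LinearMap.id_comp] at Δ_mul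
  exact nonUnitalAlgHom_comp_eq_of_convMul_eq_one Δ κ_mul_id Δ_mul

namespace BQG

variable {A : Type*} [Ring A] [Algebra ℂ A] (G : BQG A)

theorem twistedMul_one_tmul (f : T2 A →ₗ[ℂ] T2 A) (a : A) (x : T2 A) :
    twistedMul f (1 ⊗ₜ a) x = m23 (op12 f (a ⊗ₜ x)) := by
  induction x using TensorProduct.induction_on with
  | zero => simp only [tmul_zero, map_zero]
  | add x y hx hy => simp only [map_add, tmul_add, hx, hy]
  | tmul b c =>
    simp only [twistedMul_tmul_tmul, op12, LinearMap.comp_apply, LinearEquiv.coe_coe,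
      assoc_symm_tmul, rTensor_tmul]
    induction f (a ⊗ₜ b) using TensorProduct.induction_on with
    | zero => simp
    | tmul x y => simp [m23, mA]
    | add x y hx hy => simp only [map_add, add_tmul, hx, hy]

theorem twistedMul_tmul_one (f : T2 A →ₗ[ℂ] T2 A) (x : T2 A) (c : A) :
    twistedMul f x (c ⊗ₜ 1) = m12 (op23 f (TensorProduct.assoc ℂ A A A (x ⊗ₜ c))) := by
  induction x using TensorProduct.induction_on with
  | zero => simp
  | add x y hx hy => simp only [map_add, LinearMap.add_apply, add_tmul, hx, hy]
  | tmul a b =>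
    simp only [twistedMul_tmul_tmul, op23, assoc_tmul, lTensor_tmul]
    induction f (b ⊗ₜ c) using TensorProduct.induction_on with
    | zero => simp
    | tmul x y => simp [m12, mA]
    | add x y hx hy => simp only [map_add, tmul_add, hx, hy]

theorem mm_op23_4_assoc (f : T2 A →ₗ[ℂ] T2 A) (x y : T2 A) :
    mm (op23_4 f (TensorProduct.assoc ℂ A A (T2 A) (x ⊗ₜ y))) = twistedMul f x y := by
  induction x using TensorProduct.induction_on with
  | zero => simp
  | add x y hx hy => simp only [map_add, LinearMap.add_apply, add_tmul, hx, hy]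
  | tmul a b =>
    induction y using TensorProduct.induction_on with
    | zero => simp
    | add x y hx hy => simp only [map_add, tmul_add, hx, hy]
    | tmul c d =>
      simp only [twistedMul_tmul_tmul, op23_4, op12, assoc_tmul, lTensor_tmul,
        LinearMap.comp_apply, LinearEquiv.coe_coe, assoc_symm_tmul, rTensor_tmul]
      induction f (b ⊗ₜ c) using TensorProduct.induction_on with
      | zero => simp
      | tmul x y => simp [mm, m12, mA]
      | add x y hx hy => simp only [map_add, add_tmul, tmul_add, hx, hy]

theorem σ_mul_tmul (a b c : A) :
    G.σ ((a * b) ⊗ₜ c) = twistedMul G.σ (1 ⊗ₜ a) (G.σ (b ⊗ₜ c)) := by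
  rw [twistedMul_one_tmul]
  exact LinearMap.congr_fun G.braid_mul_left (a ⊗ₜ (b ⊗ₜ c))

theorem σ_tmul_mul (a b c : A) :
    G.σ (a ⊗ₜ (b * c)) = twistedMul G.σ (G.σ (a ⊗ₜ b)) (c ⊗ₜ 1) := by
  rw [twistedMul_tmul_one]
  exact LinearMap.congr_fun G.braid_mul_right (a ⊗ₜ (b ⊗ₜ c))

theorem φ_mul (a b : A) : G.φ (a * b) = twistedMul G.σ (G.φ a) (G.φ b) := by
  rw [← mm_op23_4_assoc]
  exact LinearMap.congr_fun G.comul_mul (a ⊗ₜ b)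

theorem σ_surjective : Function.Surjective G.σ := fun x ↦
  ⟨G.σ' x, LinearMap.congr_fun G.σ_comp x⟩

/-- The braiding of a braided quantum group as a twisting map. -/
def twistingMap : TwistingMap ℂ A A :=
  .ofSurjective G.σ G.σ_surjective G.σ_mul_tmul G.σ_tmul_mul

/-- The coalgebra underlying a braided quantum group. It is not an instance, as it depends on
`G`. -/
abbrev coalgebra : Coalgebra ℂ A where
  comul := G.φ
  counit := G.ε
  coassoc := G.coassoc
  rTensor_counit_comp_comul := by
    rw [← (TensorProduct.lid ℂ A).toLinearMap.cancel_left (TensorProduct.lid ℂ A).injective,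
      G.counit_left]
    ext a
    simp
  lTensor_counit_comp_comul := by
    rw [← (TensorProduct.rid ℂ A).toLinearMap.cancel_left (TensorProduct.rid ℂ A).injective,
      G.counit_right]
    ext a
    simp

end BQG

/-- The antipode is braided anticomultiplicative: `φκ = σ(κ⊗κ)φ`. -/
theorem bqg_antipode_anticomul {A : Type*} [Ring A] [Algebra ℂ A] (G : BQG A) :
    G.φ ∘ₗ G.κ = G.σ ∘ₗ TensorProduct.map G.κ G.κ ∘ₗ G.φ :=
  letI := G.coalgebra
  bqg_antipode_anticomul_general G.twistingMap G.φ_mul G.κ G.antipode_left G.antipode_right
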